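/- Let ε, δ be real parameters and consider the two-degrees-of-freedom KdV map: p̄₁ = p₁ + εδ/(ε−q₁) − εδ/(ε+q₁+q₂), p̄₂ = p₂ + εδ/(ε−q₂) − εδ/(ε+q₁+q₂), q̄₁ = q₁ − εδ/(ε−p̄₁) + εδ/(ε+p̄₁−p̄₂), q̄₂ = q₂ + εδ/(ε+p̄₂) − εδ/(ε+p̄₁−p̄₂), defined wherever all denominators are nonzero. Then the function 𝒫₁(q₁,q₂,p₁,p₂) = (δ²ε²/8)·[x₁(3y₀+3y₁−y₂) + x₂(3y₀+3y₂−y₁) + x₃(3y₁+3y₂−y₀)] + (δε/2)·[x₁x₂y₀(y₂−y₁) + x₁x₃y₁(y₀−y₂) + x₂x₃y₂(y₁−y₀)] + x₁x₂x₃y₀y₁y₂, with x₁ = ε−p₁, x₂ = ε+p₂, x₃ = ε+p₁−p₂, y₀ = ε+q₁+q₂, y₁ = ε−q₁, y₂ = ε−q₂, is invariant under this map: 𝒫₁(q̄₁,q̄₂,p̄₁,p̄₂) = 𝒫₁(q₁,q₂,p₁,p₂). -/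

import Mathlib

noncomputable section

/-- The first invariant `𝒫₁` of the two-degrees-of-freedom KdV map, in the
abbreviations `x₁ = ε−p₁`, `x₂ = ε+p₂`, `x₃ = ε+p₁−p₂`, `y₀ = ε+q₁+q₂`,
`y₁ = ε−q₁`, `y₂ = ε−q₂`. -/
def kdv2P1 (ε δ q1 q2 p1 p2 : ℝ) : ℝ :=
  let x1 := ε - p1; let x2 := ε + p2; let x3 := ε + p1 - p2
  let y0 := ε + q1 + q2; let y1 := ε - q1; let y2 := ε - q2
  δ ^ 2 * ε ^ 2 / 8 *
      (x1 * (3 * y0 + 3 * y1 - y2) + x2 * (3 * y0 + 3 * y2 - y1) +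
        x3 * (3 * y1 + 3 * y2 - y0)) +
    δ * ε / 2 *
      (x1 * x2 * y0 * (y2 - y1) + x1 * x3 * y1 * (y0 - y2) + x2 * x3 * y2 * (y1 - y0)) +
    x1 * x2 * x3 * y0 * y1 * y2

/-- `𝒫₁` is invariant under the two-degrees-of-freedom KdV map. -/
theorem kdv2_map_invariant_P1 (ε δ q1 q2 p1 p2 : ℝ)
    (h1 : ε - q1 ≠ 0) (h2 : ε - q2 ≠ 0) (h3 : ε + q1 + q2 ≠ 0)
    (pbar1 : ℝ)
    (hpbar1 : pbar1 = p1 + ε * δ / (ε - q1) - ε * δ / (ε + q1 + q2))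
    (pbar2 : ℝ)
    (hpbar2 : pbar2 = p2 + ε * δ / (ε - q2) - ε * δ / (ε + q1 + q2))
    (h4 : ε - pbar1 ≠ 0) (h5 : ε + pbar2 ≠ 0) (h6 : ε + pbar1 - pbar2 ≠ 0)
    (qbar1 : ℝ)
    (hqbar1 : qbar1 = q1 - ε * δ / (ε - pbar1) + ε * δ / (ε + pbar1 - pbar2))
    (qbar2 : ℝ)
    (hqbar2 : qbar2 = q2 + ε * δ / (ε + pbar2) - ε * δ / (ε + pbar1 - pbar2)) :
    kdv2P1 ε δ qbar1 qbar2 pbar1 pbar2 = kdv2P1 ε δ q1 q2 p1 p2 := by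
  have e1 : p1 = pbar1 - ε * δ / (ε - q1) + ε * δ / (ε + q1 + q2) := by
    rw [hpbar1]; ring
  have e2 : p2 = pbar2 - ε * δ / (ε - q2) + ε * δ / (ε + q1 + q2) := by
    rw [hpbar2]; ring
  clear hpbar1 hpbar2
  subst hqbar1 hqbar2 e1 e2
  simp only [kdv2P1]
  field_simp
  ring
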